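/- Suppose the GI/G/1-type Markov chain is irreducible, aperiodic and positive recurrent, the phase matrix A is stochastic, and min(φ_{A+}, φ_{B+}) > 1. Fix any real z with 1 < z < min(φ_{A+}, φ_{B+}, η), and let Y = (y_1,…,y_m)^t be the Perron–Frobenius right eigenvector of A*(z) with all entries ≥ 1 corresponding to the eigenvalue χ(z). Then the function V(i,r) = z^i y_r (which satisfies V ≥ 1) verifies the geometric drift condition: there exist a nonempty finite set H ⊆ S and a constant λ < 1 such that Σ_{s∈S} P((i,r),s) V(s) ≤ λ V(i,r) for all states (i,r) ∉ H, and Σ_{s∈S} P((i,r),s) V(s) < ∞ for all (i,r) ∈ H. -/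

import Mathlib

open Filter Topology
open scoped ENNReal NNReal BigOperators

namespace GIG1

/-- The state space of a `GI/G/1`-type Markov chain: level `i : ℕ`, phase `j : Fin m`. -/
abbrev S (m : ℕ) := ℕ × Fin m

/-- The transition kernel of the `GI/G/1`-type Markov chain with matrix blocks `A, B`. -/
noncomputable def P {m : ℕ} (A B : ℤ → Matrix (Fin m) (Fin m) ℝ) : S m → S m → ℝ
  | (0, j), (k, s) => B (k : ℤ) j s
  | (i + 1, j), (0, s) => B (-(i + 1 : ℤ)) j s
  | (i + 1, j), (k + 1, s) => A ((k : ℤ) - (i : ℤ)) j s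

/-- `n`-step transition probabilities. -/
noncomputable def Pn {m : ℕ} (P : S m → S m → ℝ) : ℕ → S m → S m → ℝ
  | 0, x, y => if x = y then 1 else 0
  | n + 1, x, y => ∑' z : S m, P x z * Pn P n z y

def Stochastic {m : ℕ} (P : S m → S m → ℝ) : Prop :=
  (∀ x y, 0 ≤ P x y) ∧ ∀ x, HasSum (P x) 1

def ChainIrreducible {m : ℕ} (P : S m → S m → ℝ) : Prop :=
  ∀ x y, ∃ n, 1 ≤ n ∧ 0 < Pn P n x y

def ChainAperiodic {m : ℕ} (P : S m → S m → ℝ) : Prop :=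
  ∀ x, ∃ N, ∀ n ≥ N, 0 < Pn P n x x

/-- `pd` is a stationary probability distribution of `P`; for an irreducible aperiodic chain
this is equivalent to positive recurrence. -/
def IsStationary {m : ℕ} (P : S m → S m → ℝ) (pd : S m → ℝ) : Prop :=
  (∀ x, 0 ≤ pd x) ∧ HasSum pd 1 ∧ ∀ y, HasSum (fun x => pd x * P x y) (pd y)

/-- The phase matrix `A = ∑ₖ Aₖ`. -/
noncomputable def matA {m : ℕ} (A : ℤ → Matrix (Fin m) (Fin m) ℝ) : Matrix (Fin m) (Fin m) ℝ :=
  Matrix.of fun r s => ∑' k : ℤ, A k r s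

/-- The phase matrix `A = ∑ₖ Aₖ` is stochastic. -/
def PhaseStochastic {m : ℕ} (A : ℤ → Matrix (Fin m) (Fin m) ℝ) : Prop :=
  ∀ r, HasSum (fun p : ℤ × Fin m => A p.1 r p.2) 1

/-- Irreducibility of a nonnegative matrix. -/
def MatIrreducible {m : ℕ} (M : Matrix (Fin m) (Fin m) ℝ) : Prop :=
  ∀ r s, ∃ n, 1 ≤ n ∧ 0 < (M ^ n) r s

/-- Radius of convergence of a power series with nonnegative coefficients. -/
noncomputable def radius (c : ℕ → ℝ) : ℝ≥0∞ :=
  ⨆ (r : ℝ≥0) (_ : Summable fun k => c k * (r : ℝ) ^ k), (r : ℝ≥0∞)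

/-- `φ_{A+}`: the minimum over entries of the radii of convergence of `∑_{k ≥ 1} A_k(r,s) z^k`. -/
noncomputable def phiA {m : ℕ} (A : ℤ → Matrix (Fin m) (Fin m) ℝ) : ℝ≥0∞ :=
  ⨅ (r : Fin m) (s : Fin m), radius fun k => A ((k : ℤ) + 1) r s

/-- `φ_{B+}`. -/
noncomputable def phiB {m : ℕ} (B : ℤ → Matrix (Fin m) (Fin m) ℝ) : ℝ≥0∞ :=
  ⨅ (r : Fin m) (s : Fin m), radius fun k => B ((k : ℤ) + 1) r s

/-- The matrix sequence `{C_k}_{k ≥ 1}` is light-tailed. -/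
def LightMat {m : ℕ} (C : ℤ → Matrix (Fin m) (Fin m) ℝ) : Prop :=
  ∀ r s, ∃ ε > (0 : ℝ),
    Summable fun k : ℕ => C ((k : ℤ) + 1) r s * Real.exp (ε * ((k : ℝ) + 1))

/-- `A^*(z) = ∑_{k ∈ ℤ} z^k A_k` for complex `z`. -/
noncomputable def AstarC {m : ℕ} (A : ℤ → Matrix (Fin m) (Fin m) ℝ) (z : ℂ) :
    Matrix (Fin m) (Fin m) ℂ :=
  Matrix.of fun r s => ∑' k : ℤ, (A k r s : ℂ) * z ^ k

/-- `A^*(z) = ∑_{k ∈ ℤ} z^k A_k` for real `z`. -/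
noncomputable def AstarR {m : ℕ} (A : ℤ → Matrix (Fin m) (Fin m) ℝ) (z : ℝ) :
    Matrix (Fin m) (Fin m) ℝ :=
  Matrix.of fun r s => ∑' k : ℤ, A k r s * z ^ k

/-- The set `Ω = {z ∈ ℂ : 1 < |z| < φ_{A+}, det(I - A^*(z)) = 0}`. -/
def Omega {m : ℕ} (A : ℤ → Matrix (Fin m) (Fin m) ℝ) : Set ℂ :=
  {z | 1 < ‖z‖ ∧ ENNReal.ofReal ‖z‖ < phiA A ∧ (1 - AstarC A z).det = 0}

/-- `η`: the minimal modulus of an element of `Ω`, or `∞` when `Ω = ∅`. -/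
noncomputable def eta {m : ℕ} (A : ℤ → Matrix (Fin m) (Fin m) ℝ) : ℝ≥0∞ :=
  sInf ((fun z : ℂ => ENNReal.ofReal ‖z‖) '' Omega A)

/-- The largest (Perron–Frobenius) eigenvalue of a nonnegative matrix. -/
noncomputable def chi {m : ℕ} (M : Matrix (Fin m) (Fin m) ℝ) : ℝ :=
  sSup {r : ℝ | ∃ v : Fin m → ℝ, v ≠ 0 ∧ M.mulVec v = r • v}

/-!
Away from level `0`, `P V` equals `χ(z) V` up to a bounded boundary term, so everything reduces to
`χ(z) < 1`. Call a nonnegative matrix `M` subcritical if `M v < v` for some `v > 0`. The resolvent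
`(1 - M)⁻¹` is then nonnegative, and as long as `det (1 - M)` does not vanish subcriticality
propagates along a continuous path. Since `A^*(t)` has no eigenvalue `1` for `1 < t ≤ z < η`, it is
enough to find one `t` slightly larger than `1` with `A^*(t)` subcritical.

Let `π` be the stationary law of the phase matrix. If the mean drift of the level under `π` is
negative, solving the Poisson equation for the phase matrix gives `h` such that `v = 1 + (t - 1) h`
works. The mean may be `-∞`, so the drift is computed with the slopes `(t ^ k - 1) / (t - 1)`, which
decrease to `k` as `t` decreases to `1`. If the mean drift is nonnegative, the Poisson equation
instead makes `max (i + h r) 0` subharmonic for the chain, with bounded mean positive increments;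
in a positive recurrent chain such a function is constant, which this one is not.
-/

section Chain

variable {X : Type*} {Q : X → X → ℝ} {G π : X → ℝ} {x y : X}

theorem eq_zero_of_superharmonic_of_reachable (hQ : ∀ x y, 0 ≤ Q x y) (hG : ∀ x, 0 ≤ G x)
    (hQG : ∀ x, Summable fun y => Q x y * G y) (hsuper : ∀ x, ∑' y, Q x y * G y ≤ G x)
    (hxy : Relation.ReflTransGen (fun x y => 0 < Q x y) x y) (hx : G x = 0) : G y = 0 := by
  induction hxy with
  | refl => exact hx
  | @tail b c _ hbc hb =>
    have hterm : Q b c * G c ≤ G b :=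
      ((hQG b).le_tsum c fun y _ => mul_nonneg (hQ b y) (hG y)).trans (hsuper b)
    exact le_antisymm (nonpos_of_mul_nonpos_right (hb ▸ hterm) hbc) (hG c)

theorem invariant_pos_of_reachable (hQ : ∀ x y, 0 ≤ Q x y) (hπ0 : ∀ x, 0 ≤ π x)
    (hπ : ∀ y, HasSum (fun x => π x * Q x y) (π y))
    (hxy : Relation.ReflTransGen (fun x y => 0 < Q x y) x y) (hx : 0 < π x) : 0 < π y := by
  induction hxy with
  | refl => exact hx
  | @tail b c _ hbc hb =>
    exact (mul_pos hb hbc).trans_le (le_hasSum (hπ c) b fun x _ => mul_nonneg (hπ0 x) (hQ x c))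

theorem summable_invariant_mul (hQ0 : ∀ x y, 0 ≤ Q x y) (hQ1 : ∀ x, HasSum (Q x) 1)
    (hπ0 : ∀ x, 0 ≤ π x) (hπ1 : Summable π) :
    Summable fun p : X × X => π p.1 * Q p.1 p.2 := by
  refine (summable_prod_of_nonneg fun p => mul_nonneg (hπ0 _) (hQ0 _ _)).2
    ⟨fun x => (hQ1 x).summable.mul_left (π x), ?_⟩
  simpa only [tsum_mul_left, (hQ1 _).tsum_eq, mul_one] using hπ1

theorem hasSum_invariant_mul_tsum_sub_of_bounded (hQ0 : ∀ x y, 0 ≤ Q x y)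
    (hQ1 : ∀ x, HasSum (Q x) 1) (hπ0 : ∀ x, 0 ≤ π x) (hπ1 : Summable π)
    (hπ : ∀ y, HasSum (fun x => π x * Q x y) (π y)) {C : ℝ} (hG : ∀ x, |G x| ≤ C) :
    HasSum (fun x => π x * ∑' y, Q x y * (G y - G x)) 0 := by
  have summable_flow (f : X × X → ℝ) (hf : ∀ p, |f p| ≤ C) :
      Summable fun p : X × X => π p.1 * Q p.1 p.2 * f p := by
    refine ((summable_invariant_mul hQ0 hQ1 hπ0 hπ1).mul_right C).of_norm_bounded fun p => ?_
    rw [norm_mul, Real.norm_of_nonneg (mul_nonneg (hπ0 _) (hQ0 _ _))]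
    exact mul_le_mul_of_nonneg_left (hf p) (mul_nonneg (hπ0 _) (hQ0 _ _))
  have hin := summable_flow (fun p => G p.2) fun p => hG p.2
  have hout := summable_flow (fun p => G p.1) fun p => hG p.1
  have hin_tsum : ∑' p : X × X, π p.1 * Q p.1 p.2 * G p.2 = ∑' x, π x * G x := by
    have hswap : Summable fun p : X × X => π p.2 * Q p.2 p.1 * G p.1 :=
      (Equiv.prodComm X X).summable_iff.2 hin
    refine ((Equiv.prodComm X X).tsum_eq _).symm.trans (hswap.tsum_prod.trans ?_)
    exact tsum_congr fun y => by simp only [tsum_mul_right, (hπ y).tsum_eq]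
  have hout_tsum : ∑' p : X × X, π p.1 * Q p.1 p.2 * G p.1 = ∑' x, π x * G x := by
    rw [hout.tsum_prod]
    exact tsum_congr fun x => by
      simp only [tsum_mul_right, tsum_mul_left, (hQ1 x).tsum_eq, mul_one]
  have hnet := hin.hasSum.sub hout.hasSum
  rw [hin_tsum, hout_tsum, sub_self] at hnet
  have hnet' := hnet.summable.prod.hasSum
  rw [← hnet.summable.tsum_prod, hnet.tsum_eq] at hnet'
  refine hnet'.congr_fun fun x => ?_
  rw [← tsum_mul_left]
  exact tsum_congr fun y => by ring

theorem abs_clamp_sub_clamp_le (a b c : ℝ) :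
    |max (min a c) (-c) - max (min b c) (-c)| ≤ |a - b| :=
  (abs_max_sub_max_le_abs _ _ _).trans (by simpa using abs_min_sub_min_le_max a c b c)

theorem tendsto_clamp (a : ℝ) :
    Tendsto (fun n : ℕ => max (min a n) (-n : ℝ)) atTop (𝓝 a) := by
  obtain ⟨N, hN⟩ := exists_nat_ge |a|
  refine tendsto_const_nhds.congr' ?_
  filter_upwards [eventually_ge_atTop N] with n hn
  have han : |a| ≤ n := hN.trans (by exact_mod_cast hn)
  rw [min_eq_left (abs_le.1 han).2, max_eq_left (abs_le.1 han).1]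

/- The truncations of `G` have zero mean drift, and the bound on the absolute increments lets
both sums pass to the limit. -/
theorem tsum_invariant_mul_tsum_sub_eq_zero (hQ0 : ∀ x y, 0 ≤ Q x y)
    (hQ1 : ∀ x, HasSum (Q x) 1) (hπ0 : ∀ x, 0 ≤ π x) (hπ1 : Summable π)
    (hπ : ∀ y, HasSum (fun x => π x * Q x y) (π y))
    (hΔ : ∀ x, Summable fun y => Q x y * |G y - G x|) {K : ℝ}
    (hK : ∀ x, ∑' y, Q x y * |G y - G x| ≤ K) :
    ∑' x, π x * ∑' y, Q x y * (G y - G x) = 0 := by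
  let clampG (n : ℕ) (x : X) : ℝ := max (min (G x) n) (-n)
  have hstep (n : ℕ) (x y : X) :
      ‖Q x y * (clampG n y - clampG n x)‖ ≤ Q x y * |G y - G x| := by
    rw [norm_mul, Real.norm_of_nonneg (hQ0 x y)]
    exact mul_le_mul_of_nonneg_left (abs_clamp_sub_clamp_le _ _ _) (hQ0 x y)
  have hrow (x : X) : Tendsto (fun n => ∑' y, Q x y * (clampG n y - clampG n x)) atTop
      (𝓝 (∑' y, Q x y * (G y - G x))) :=
    tendsto_tsum_of_dominated_convergence (hΔ x)
      (fun y => ((tendsto_clamp (G y)).sub (tendsto_clamp (G x))).const_mul _)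
      (.of_forall fun n y => hstep n x y)
  have hlim : Tendsto (fun n => ∑' x, π x * ∑' y, Q x y * (clampG n y - clampG n x)) atTop
      (𝓝 (∑' x, π x * ∑' y, Q x y * (G y - G x))) := by
    refine tendsto_tsum_of_dominated_convergence (hπ1.mul_right K)
      (fun x => (hrow x).const_mul _) (.of_forall fun n x => ?_)
    rw [norm_mul, Real.norm_of_nonneg (hπ0 x)]
    exact mul_le_mul_of_nonneg_left
      ((tsum_of_norm_bounded (hΔ x).hasSum (hstep n x)).trans (hK x)) (hπ0 x)
  have hzero (n : ℕ) : ∑' x, π x * ∑' y, Q x y * (clampG n y - clampG n x) = 0 :=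
    (hasSum_invariant_mul_tsum_sub_of_bounded hQ0 hQ1 hπ0 hπ1 hπ (C := n) fun x =>
      abs_le.2 ⟨le_max_right _ _, max_le (min_le_right _ _) (by simp)⟩).tsum_eq
  exact tendsto_nhds_unique hlim (by simp only [hzero, tendsto_const_nhds])

theorem hasSum_mul_abs_sub (hQ1 : ∀ x, HasSum (Q x) 1) (hQG : ∀ x, Summable fun y => Q x y * G y)
    (hinc : ∀ x, Summable fun y => Q x y * max (G y - G x) 0) (x : X) :
    HasSum (fun y => Q x y * |G y - G x|)
      (2 * ∑' y, Q x y * max (G y - G x) 0 - (∑' y, Q x y * G y - G x)) := by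
  have hdiff := (hQG x).hasSum.sub ((hQ1 x).mul_right (G x))
  rw [one_mul] at hdiff
  refine (((hinc x).hasSum.mul_left 2).sub hdiff).congr_fun fun y => ?_
  rcases le_total 0 (G y - G x) with hle | hle
  · rw [abs_of_nonneg hle, max_eq_left hle]; ring
  · rw [abs_of_nonpos hle, max_eq_right hle]; ring

theorem harmonic_of_subharmonic_of_increments_le (hQ0 : ∀ x y, 0 ≤ Q x y)
    (hQ1 : ∀ x, HasSum (Q x) 1) (hπ0 : ∀ x, 0 < π x) (hπ1 : Summable π)
    (hπ : ∀ y, HasSum (fun x => π x * Q x y) (π y))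
    (hQG : ∀ x, Summable fun y => Q x y * G y) (hsub : ∀ x, G x ≤ ∑' y, Q x y * G y)
    (hinc : ∀ x, Summable fun y => Q x y * max (G y - G x) 0) {K : ℝ}
    (hK : ∀ x, ∑' y, Q x y * max (G y - G x) 0 ≤ K) (x : X) :
    ∑' y, Q x y * G y = G x := by
  have habs := hasSum_mul_abs_sub hQ1 hQG hinc
  have habsK (x : X) : ∑' y, Q x y * |G y - G x| ≤ 2 * K := by
    rw [(habs x).tsum_eq]
    linarith [hsub x, hK x]
  have hdrift (x : X) : ∑' y, Q x y * (G y - G x) = ∑' y, Q x y * G y - G x := by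
    have hdiff := (hQG x).hasSum.sub ((hQ1 x).mul_right (G x))
    simpa only [mul_sub, one_mul] using hdiff.tsum_eq
  have hmean := tsum_invariant_mul_tsum_sub_eq_zero hQ0 hQ1 (fun x => (hπ0 x).le) hπ1 hπ
    (fun x => (habs x).summable) habsK
  simp only [hdrift] at hmean
  have hnonneg (x : X) : 0 ≤ π x * (∑' y, Q x y * G y - G x) :=
    mul_nonneg (hπ0 x).le (sub_nonneg.2 (hsub x))
  have hsummable : Summable fun x => π x * (∑' y, Q x y * G y - G x) := by
    refine .of_nonneg_of_le hnonneg (fun x => ?_) (hπ1.mul_right (2 * K))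
    have hle := (habs x).nonneg fun y => mul_nonneg (hQ0 x y) (abs_nonneg _)
    exact mul_le_mul_of_nonneg_left (by linarith [hK x]) (hπ0 x).le
  have hzero := congrFun ((hasSum_zero_iff_of_nonneg hnonneg).1 (hmean ▸ hsummable.hasSum)) x
  exact sub_eq_zero.1 ((mul_eq_zero.1 hzero).resolve_left (hπ0 x).ne')

theorem subharmonic_eq_zero_of_positive_recurrent (hQ0 : ∀ x y, 0 ≤ Q x y)
    (hQ1 : ∀ x, HasSum (Q x) 1)
    (hirr : ∀ x y, Relation.ReflTransGen (fun x y => 0 < Q x y) x y)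
    (hπ0 : ∀ x, 0 ≤ π x) (hπ1 : HasSum π 1) (hπ : ∀ y, HasSum (fun x => π x * Q x y) (π y))
    (hG : ∀ x, 0 ≤ G x) (hQG : ∀ x, Summable fun y => Q x y * G y)
    (hsub : ∀ x, G x ≤ ∑' y, Q x y * G y)
    (hinc : BddAbove (Set.range fun x => ∑' y, Q x y * max (G y - G x) 0))
    (hx : G x = 0) (y : X) : G y = 0 := by
  obtain ⟨x₀, hx₀⟩ : ∃ x, 0 < π x := by
    by_contra! hnonpos
    exact zero_ne_one (hasSum_zero.unique
      (funext (fun x => le_antisymm (hnonpos x) (hπ0 x)) ▸ hπ1 : HasSum (fun _ : X => (0 : ℝ)) 1))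
  have hπpos (y : X) := invariant_pos_of_reachable hQ0 hπ0 hπ (hirr x₀ y) hx₀
  have hsummable (x : X) : Summable fun y => Q x y * max (G y - G x) 0 :=
    .of_nonneg_of_le (fun y => mul_nonneg (hQ0 x y) (le_max_right _ _))
      (fun y => mul_le_mul_of_nonneg_left (max_le (by linarith [hG x]) (hG y)) (hQ0 x y)) (hQG x)
  obtain ⟨K, hK⟩ := hinc
  have hharm := harmonic_of_subharmonic_of_increments_le hQ0 hQ1 hπpos hπ1.summable hπ hQG hsub
    hsummable fun x => hK ⟨x, rfl⟩
  exact eq_zero_of_superharmonic_of_reachable hQ0 hG hQG (fun x => (hharm x).le) (hirr x y) hx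

end Chain

section StochasticMatrix

open Matrix

variable {ι : Type*} [Fintype ι] {M : Matrix ι ι ℝ}

/-- The map `h ↦ h - M h + h(i₀) 1`. For an irreducible stochastic `M` it is invertible, and
solving `poissonMap M i₀ h = d` solves the Poisson equation `h - M h = d - c 1` with `c = h(i₀)`. -/
noncomputable def poissonMap (M : Matrix ι ι ℝ) (i₀ : ι) : (ι → ℝ) →ₗ[ℝ] (ι → ℝ) :=
  LinearMap.id - M.mulVecLin + (LinearMap.proj i₀).smulRight 1

theorem poissonMap_apply (M : Matrix ι ι ℝ) (i₀ : ι) (h : ι → ℝ) (i : ι) :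
    poissonMap M i₀ h i = h i - (M *ᵥ h) i + h i₀ := by
  simp [poissonMap]

variable [DecidableEq ι]

theorem reachable_of_pow_pos (hM : ∀ i j, 0 ≤ M i j) {n : ℕ} {i j : ι} (hn : 0 < (M ^ n) i j) :
    Relation.ReflTransGen (fun i j => 0 < M i j) i j := by
  induction n generalizing j with
  | zero =>
    obtain rfl : i = j := by
      by_contra hij
      simp [hij] at hn
    exact .refl
  | succ n ih =>
    rw [pow_succ, mul_apply] at hn
    obtain ⟨k, -, hk⟩ := Finset.exists_lt_of_sum_lt
      ((Finset.sum_const_zero (s := (Finset.univ : Finset ι))).trans_lt hn)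
    have hik : 0 < (M ^ n) i k := pos_of_mul_pos_left hk (hM k j)
    exact (ih hik).tail (pos_of_mul_pos_right hk hik.le)

theorem mulVec_const_of_mem_rowStochastic (hM : M ∈ rowStochastic ℝ ι) (c : ℝ) :
    M *ᵥ (fun _ => c) = fun _ => c := by
  have hconst : (fun _ : ι => c) = c • 1 := by ext; simp
  rw [hconst, mulVec_smul, one_vecMul_of_mem_rowStochastic hM]

theorem nonpos_of_add_le_mulVec [Nonempty ι] (hM : M ∈ rowStochastic ℝ ι) {h : ι → ℝ} {c : ℝ}
    (hc : ∀ i, h i + c ≤ (M *ᵥ h) i) : c ≤ 0 := by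
  obtain ⟨i, hi⟩ := Finite.exists_max h
  have hle : (M *ᵥ h) i ≤ (M *ᵥ fun _ => h i) i :=
    dotProduct_le_dotProduct_of_nonneg_left hi fun _ => nonneg_of_mem_rowStochastic hM
  rw [mulVec_const_of_mem_rowStochastic hM] at hle
  linarith [hc i]

theorem eq_of_mulVec_le (hM : M ∈ rowStochastic ℝ ι)
    (hirr : ∀ i j, Relation.ReflTransGen (fun i j => 0 < M i j) i j) {h : ι → ℝ}
    (hh : ∀ i, (M *ᵥ h) i ≤ h i) (i j : ι) : h i = h j := by
  have : Nonempty ι := ⟨i⟩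
  obtain ⟨i₀, hi₀⟩ := Finite.exists_min h
  have hsuper (i : ι) : ∑' j, M i j * (h j - h i₀) ≤ h i - h i₀ := by
    simp only [tsum_fintype, mul_sub, Finset.sum_sub_distrib, ← Finset.sum_mul,
      sum_row_of_mem_rowStochastic hM, one_mul]
    exact sub_le_sub_right (hh i) _
  have hmin (j : ι) : h j - h i₀ = 0 :=
    eq_zero_of_superharmonic_of_reachable (Q := M) (G := fun i => h i - h i₀)
      (fun _ _ => nonneg_of_mem_rowStochastic hM) (fun i => sub_nonneg.2 (hi₀ i))
      (fun _ => (hasSum_fintype _).summable) hsuper (hirr i₀ j) (sub_self _)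
  linarith [hmin i, hmin j]

theorem poissonMap_injective (hM : M ∈ rowStochastic ℝ ι)
    (hirr : ∀ i j, Relation.ReflTransGen (fun i j => 0 < M i j) i j) (i₀ : ι) :
    Function.Injective (poissonMap M i₀) := by
  have : Nonempty ι := ⟨i₀⟩
  refine (injective_iff_map_eq_zero _).2 fun h hh => funext fun i => ?_
  have heq (i : ι) : h i - (M *ᵥ h) i + h i₀ = 0 := by rw [← poissonMap_apply, hh, Pi.zero_apply]
  have hle : h i₀ ≤ 0 := nonpos_of_add_le_mulVec (h := h) hM fun i => by linarith [heq i]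
  have hge : -h i₀ ≤ 0 := nonpos_of_add_le_mulVec (h := -h) hM fun i => by
    rw [mulVec_neg, Pi.neg_apply, Pi.neg_apply]
    linarith [heq i]
  rw [eq_of_mulVec_le hM hirr (h := h) (fun i => by linarith [heq i]) i i₀, Pi.zero_apply]
  linarith

theorem pos_of_single_add_mulVec_sub_eq (hM : M ∈ rowStochastic ℝ ι)
    (hirr : ∀ i j, Relation.ReflTransGen (fun i j => 0 < M i j) i j) {i : ι} {h : ι → ℝ} {c : ℝ}
    (hc : ∀ j, (Pi.single i 1 : ι → ℝ) j + (M *ᵥ h) j - h j = c) : 0 < c := by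
  by_contra! hc0
  have hsingle (j : ι) : 0 ≤ (Pi.single i 1 : ι → ℝ) j := by
    rw [Pi.single_apply]
    split_ifs <;> norm_num
  have hconst : h = fun _ => h i :=
    funext fun j => eq_of_mulVec_le hM hirr (fun j => by linarith [hc j, hsingle j]) j i
  have hi := hc i
  rw [hconst, mulVec_const_of_mem_rowStochastic hM, Pi.single_eq_same] at hi
  linarith

theorem exists_pos_forall_exists_add_mulVec_sub_eq_dotProduct [Nonempty ι]
    (hM : M ∈ rowStochastic ℝ ι)
    (hirr : ∀ i j, Relation.ReflTransGen (fun i j => 0 < M i j) i j) :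
    ∃ π : ι → ℝ, (∀ i, 0 < π i) ∧
      ∀ d : ι → ℝ, ∃ h : ι → ℝ, ∀ i, d i + (M *ᵥ h) i - h i = π ⬝ᵥ d := by
  obtain ⟨i₀⟩ := ‹Nonempty ι›
  let L := LinearEquiv.ofInjectiveEndo (poissonMap M i₀) (poissonMap_injective hM hirr i₀)
  have hsolve (d : ι → ℝ) (i : ι) :
      d i + (M *ᵥ L.symm d) i - L.symm d i = L.symm d i₀ := by
    have happly : poissonMap M i₀ (L.symm d) i = d i := congrFun (L.apply_symm_apply d) i
    rw [poissonMap_apply] at happly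
    linarith
  refine ⟨fun i => L.symm (Pi.single i 1) i₀,
    fun i => pos_of_single_add_mulVec_sub_eq hM hirr (hsolve _), fun d => ⟨L.symm d, fun i => ?_⟩⟩
  have hsum : L.symm d i₀ = ∑ i, d i * L.symm (Pi.single i 1) i₀ := by
    have hd : d = ∑ i, d i • Pi.single i 1 := by ext j; simp [Pi.single_apply]
    conv_lhs => rw [hd]
    simp only [map_sum, map_smul, Finset.sum_apply, Pi.smul_apply, smul_eq_mul]
  rw [hsolve, hsum, dotProduct_comm, dotProduct]

end StochasticMatrix

/-- The Collatz–Wielandt form of the condition that the spectral radius of a nonnegative matrix is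
less than `1`. -/
def Subcritical {ι : Type*} [Fintype ι] (M : Matrix ι ι ℝ) : Prop :=
  ∃ u : ι → ℝ, (∀ i, 0 < u i) ∧ ∀ i, (M.mulVec u) i < u i

namespace Subcritical

open Matrix

variable {ι : Type*} [Fintype ι] {M : Matrix ι ι ℝ}

theorem eigenvalue_lt_one [Nonempty ι] (hM : ∀ i j, 0 ≤ M i j) (hsub : Subcritical M)
    {v : ι → ℝ} (hv : ∀ i, 0 < v i) {c : ℝ} (hc : M *ᵥ v = c • v) : c < 1 := by
  obtain ⟨u, hu, hMu⟩ := hsub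
  obtain ⟨i, hi⟩ := Finite.exists_max fun i => v i / u i
  have hvu : v ≤ (v i / u i) • u := fun j => (div_le_iff₀ (hu j)).1 (hi j)
  have hlt : c * v i < 1 * v i := calc
    c * v i = (M *ᵥ v) i := by rw [hc, Pi.smul_apply, smul_eq_mul]
    _ ≤ (M *ᵥ (v i / u i) • u) i := dotProduct_le_dotProduct_of_nonneg_left hvu (hM i)
    _ = v i / u i * (M *ᵥ u) i := by rw [mulVec_smul, Pi.smul_apply, smul_eq_mul]
    _ < v i / u i * u i := mul_lt_mul_of_pos_left (hMu i) (div_pos (hv i) (hu i))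
    _ = 1 * v i := by rw [div_mul_cancel₀ _ (hu i).ne', one_mul]
  exact lt_of_mul_lt_mul_right hlt (hv i).le

theorem nonneg_of_mulVec_le (hM : ∀ i j, 0 ≤ M i j) (hsub : Subcritical M) {v : ι → ℝ}
    (hv : M *ᵥ v ≤ v) : 0 ≤ v := by
  obtain ⟨u, hu, hMu⟩ := hsub
  intro j
  by_contra! hj
  have : Nonempty ι := ⟨j⟩
  obtain ⟨i, hi⟩ := Finite.exists_min fun i => v i / u i
  have hneg : v i / u i < 0 := (hi j).trans_lt (div_neg_of_neg_of_pos hj (hu j))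
  have huv : (v i / u i) • u ≤ v := fun j => (le_div_iff₀ (hu j)).1 (hi j)
  have hlt : v i < v i := calc
    v i = v i / u i * u i := (div_mul_cancel₀ _ (hu i).ne').symm
    _ < v i / u i * (M *ᵥ u) i := mul_lt_mul_of_neg_left (hMu i) hneg
    _ = (M *ᵥ (v i / u i) • u) i := by rw [mulVec_smul, Pi.smul_apply, smul_eq_mul]
    _ ≤ (M *ᵥ v) i := dotProduct_le_dotProduct_of_nonneg_left huv (hM i)
    _ ≤ v i := hv i
  exact hlt.false

variable [DecidableEq ι]

theorem resolvent_eq (hdet : (1 - M).det ≠ 0) :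
    M *ᵥ ((1 - M)⁻¹ *ᵥ 1) + 1 = (1 - M)⁻¹ *ᵥ 1 := by
  have hinv : (1 - M) *ᵥ ((1 - M)⁻¹ *ᵥ (1 : ι → ℝ)) = 1 := by
    rw [mulVec_mulVec, mul_nonsing_inv _ (isUnit_iff_ne_zero.2 hdet), one_mulVec]
  rw [sub_mulVec, one_mulVec] at hinv
  rw [add_comm]
  exact (sub_eq_iff_eq_add.1 hinv).symm

theorem one_le_resolvent (hM : ∀ i j, 0 ≤ M i j) (hdet : (1 - M).det ≠ 0)
    (hnonneg : 0 ≤ (1 - M)⁻¹ *ᵥ (1 : ι → ℝ)) : 1 ≤ (1 - M)⁻¹ *ᵥ (1 : ι → ℝ) := by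
  rw [← resolvent_eq hdet]
  exact le_add_of_nonneg_left fun i => dotProduct_nonneg_of_nonneg (hM i) hnonneg

theorem iff_resolvent_nonneg (hM : ∀ i j, 0 ≤ M i j) (hdet : (1 - M).det ≠ 0) :
    Subcritical M ↔ 0 ≤ (1 - M)⁻¹ *ᵥ (1 : ι → ℝ) := by
  refine ⟨fun hsub => hsub.nonneg_of_mulVec_le hM ?_, fun hnonneg =>
    ⟨(1 - M)⁻¹ *ᵥ 1, fun i => ?_, fun i => ?_⟩⟩
  · exact (le_add_of_nonneg_right zero_le_one).trans_eq (resolvent_eq hdet)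
  · exact one_pos.trans_le (one_le_resolvent hM hdet hnonneg i)
  · exact (lt_add_one _).trans_eq (congrFun (resolvent_eq hdet) i)

/- The least entry of `(1 - M t)⁻¹ 1` is continuous, and it is at least `1` wherever it is
nonnegative, so it cannot change sign. -/
theorem of_isPreconnected [Nonempty ι] {T : Type*} [TopologicalSpace T] {s : Set T}
    (hs : IsPreconnected s) {M : T → Matrix ι ι ℝ} (hM : ∀ t ∈ s, ∀ i j, 0 ≤ M t i j)
    (hcont : ContinuousOn M s) (hdet : ∀ t ∈ s, (1 - M t).det ≠ 0) {a b : T} (ha : a ∈ s)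
    (hb : b ∈ s) (hsub : Subcritical (M a)) : Subcritical (M b) := by
  let v (t : T) : ι → ℝ := (1 - M t)⁻¹ *ᵥ 1
  let least (t : T) : ℝ := Finset.univ.inf' Finset.univ_nonempty (v t)
  have le_least (t : T) (c : ℝ) : c ≤ least t ↔ ∀ i, c ≤ v t i := by
    simp [least, Finset.le_inf'_iff]
  have hinv : ContinuousOn (fun t => (1 - M t)⁻¹) s := fun t ht =>
    ContinuousAt.comp_continuousWithinAt (f := fun t => 1 - M t)
      (continuousAt_matrix_inv _ (NormedRing.inverse_continuousAt (Units.mk0 _ (hdet t ht))))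
      (continuousOn_const.sub hcont t ht)
  have hv : ContinuousOn v s :=
    (continuous_id.matrix_mulVec continuous_const).comp_continuousOn hinv
  have hleast : ContinuousOn least s :=
    .finset_inf'_apply _ fun i _ => (continuous_apply i).comp_continuousOn hv
  have hgap (t : T) (ht : t ∈ s) (h0 : 0 ≤ least t) : 1 ≤ least t :=
    (le_least t 1).2 (one_le_resolvent (hM t ht) (hdet t ht) ((le_least t 0).1 h0))
  have hleast_a : 0 ≤ least a :=
    (le_least a 0).2 ((iff_resolvent_nonneg (hM a ha) (hdet a ha)).1 hsub)
  refine (iff_resolvent_nonneg (hM b hb) (hdet b hb)).2 ((le_least b 0).1 ?_)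
  by_contra! hneg
  obtain ⟨t, ht, hzero⟩ := hs.intermediate_value hb ha hleast ⟨hneg.le, hleast_a⟩
  linarith [hgap t ht hzero.ge]

end Subcritical

section Slope

/-- The slope `(w ^ k - 1) / (w - 1)` of `t ↦ t ^ k` between `1` and `w`. By convexity it decreases
to the derivative `k` as `w` decreases to `1`; at `w = 1` it has the junk value `0`. -/
noncomputable def zpowSlope (w : ℝ) (k : ℤ) : ℝ := slope (fun t : ℝ => t ^ k) 1 w

theorem zpow_eq_one_add_mul_zpowSlope (w : ℝ) (k : ℤ) : w ^ k = 1 + (w - 1) * zpowSlope w k := by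
  have h := sub_smul_slope (fun t : ℝ => t ^ k) 1 w
  rw [smul_eq_mul, vsub_eq_sub, one_zpow] at h
  rw [zpowSlope, h, add_sub_cancel]

theorem zpowSlope_le_zpowSlope {w z : ℝ} (hw : 1 < w) (hwz : w ≤ z) (k : ℤ) :
    zpowSlope w k ≤ zpowSlope z k :=
  (convexOn_zpow (𝕜 := ℝ) k).slope_mono (Set.mem_Ioi.2 one_pos)
    ⟨Set.mem_Ioi.2 (one_pos.trans hw), hw.ne'⟩
    ⟨Set.mem_Ioi.2 (one_pos.trans (hw.trans_le hwz)), (hw.trans_le hwz).ne'⟩ hwz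

theorem tendsto_zpowSlope (k : ℤ) : Tendsto (zpowSlope · k) (𝓝[>] 1) (𝓝 (k : ℝ)) := by
  have h := hasDerivAt_iff_tendsto_slope.1 (hasDerivAt_zpow (𝕜 := ℝ) k 1 (.inl one_ne_zero))
  rw [one_zpow, mul_one] at h
  exact h.mono_left (nhdsWithin_mono _ fun x (hx : 1 < x) => hx.ne')

theorem intCast_le_zpowSlope {w : ℝ} (hw : 1 < w) (k : ℤ) : (k : ℝ) ≤ zpowSlope w k := by
  refine le_of_tendsto (tendsto_zpowSlope k) ?_
  filter_upwards [Ioc_mem_nhdsGT hw] with t ht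
  exact zpowSlope_le_zpowSlope ht.1 ht.2 k

theorem zpow_le_one_add_zpow {t z : ℝ} (ht : 1 ≤ t) (htz : t ≤ z) (k : ℤ) :
    t ^ k ≤ 1 + z ^ k := by
  have hz : 0 ≤ z := zero_le_one.trans (ht.trans htz)
  rcases le_total 0 k with hk | hk
  · exact (zpow_le_zpow_left₀ hk (zero_le_one.trans ht) htz).trans
      (le_add_of_nonneg_left zero_le_one)
  · exact (zpow_le_one_of_nonpos₀ ht hk).trans (le_add_of_nonneg_right (zpow_nonneg hz k))

variable {a : ℤ → ℝ} {t z : ℝ}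

theorem summable_mul_zpow_of_nat (ha : ∀ k, 0 ≤ a k) (hs : Summable a) (hz : 1 ≤ z)
    (h : Summable fun k : ℕ => a k * z ^ k) : Summable fun k : ℤ => a k * z ^ k := by
  refine .of_nat_of_neg (by simpa only [zpow_natCast] using h) ?_
  refine .of_nonneg_of_le (fun k => mul_nonneg (ha _) (zpow_nonneg (zero_le_one.trans hz) _))
    (fun k => ?_) (hs.comp_injective (neg_injective.comp Nat.cast_injective))
  exact mul_le_of_le_one_right (ha _) (zpow_le_one_of_nonpos₀ hz (by simp))

theorem mul_zpow_le_add (ha : ∀ k, 0 ≤ a k) (ht : 1 ≤ t) (htz : t ≤ z) (k : ℤ) :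
    a k * t ^ k ≤ a k + a k * z ^ k := by
  linarith [mul_le_mul_of_nonneg_left (zpow_le_one_add_zpow ht htz k) (ha k)]

theorem summable_mul_zpow_of_le (ha : ∀ k, 0 ≤ a k) (hs : Summable a)
    (hz : Summable fun k => a k * z ^ k) (ht : 1 ≤ t) (htz : t ≤ z) :
    Summable fun k => a k * t ^ k :=
  .of_nonneg_of_le (fun k => mul_nonneg (ha k) (zpow_nonneg (zero_le_one.trans ht) k))
    (mul_zpow_le_add ha ht htz) (hs.add hz)

theorem continuousOn_tsum_mul_zpow (ha : ∀ k, 0 ≤ a k) (hs : Summable a)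
    (hz : Summable fun k => a k * z ^ k) :
    ContinuousOn (fun t : ℝ => ∑' k, a k * t ^ k) (Set.Icc 1 z) := by
  refine continuousOn_tsum (fun k => ?_) (hs.add hz) fun k t ht => ?_
  · exact continuousOn_const.mul
      (continuousOn_id.zpow₀ k fun t ht => .inl (one_pos.trans_le ht.1).ne')
  · rw [Real.norm_of_nonneg (mul_nonneg (ha k) (zpow_nonneg (zero_le_one.trans ht.1) k))]
    exact mul_zpow_le_add ha ht.1 ht.2 k

theorem summable_mul_zpowSlope (hs : Summable a) (hz : Summable fun k => a k * z ^ k) :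
    Summable fun k => a k * zpowSlope z k := by
  refine ((hz.sub hs).mul_right (z - 1)⁻¹).congr fun k => ?_
  rw [zpowSlope, slope_def_field, one_zpow]
  ring

/- The terms `a k * (zpowSlope z k - zpowSlope w k)` are nonnegative and increase to
`a k * (zpowSlope z k - k)` as `w ↓ 1`. -/
theorem summable_mul_intCast_of_tsum_sub_le (ha : ∀ k, 0 ≤ a k) (hz : 1 < z)
    (hslope : ∀ w ∈ Set.Ioc 1 z, Summable fun k => a k * zpowSlope w k) {C : ℝ}
    (hC : ∀ w ∈ Set.Ioc 1 z,
      ∑' k, a k * zpowSlope z k - ∑' k, a k * zpowSlope w k ≤ C) :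
    Summable fun k => a k * (k : ℝ) := by
  have hz_slope := hslope z ⟨hz, le_rfl⟩
  have hgap : Summable fun k => a k * zpowSlope z k - a k * (k : ℝ) := by
    refine summable_of_sum_le (c := C) (fun k => sub_nonneg.2 <|
      mul_le_mul_of_nonneg_left (intCast_le_zpowSlope hz k) (ha k)) fun F => ?_
    have hlim : Tendsto (fun w => ∑ k ∈ F, (a k * zpowSlope z k - a k * zpowSlope w k)) (𝓝[>] 1)
        (𝓝 (∑ k ∈ F, (a k * zpowSlope z k - a k * (k : ℝ)))) :=
      tendsto_finsetSum _ fun k _ => ((tendsto_zpowSlope k).const_mul _).const_sub _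
    refine le_of_tendsto hlim ?_
    filter_upwards [Ioc_mem_nhdsGT hz] with w hw
    refine ((hz_slope.sub (hslope w hw)).sum_le_tsum F fun k _ => sub_nonneg.2 <|
      mul_le_mul_of_nonneg_left (zpowSlope_le_zpowSlope hw.1 hw.2 k) (ha k)).trans ?_
    exact (hz_slope.tsum_sub (hslope w hw)).trans_le (hC w hw)
  exact (hz_slope.sub hgap).congr fun k => sub_sub_cancel _ _

theorem tendsto_tsum_mul_zpowSlope (ha : ∀ k, 0 ≤ a k) (hz : 1 < z)
    (hslope : Summable fun k => a k * zpowSlope z k) (hmean : Summable fun k => a k * (k : ℝ)) :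
    Tendsto (fun w => ∑' k, a k * zpowSlope w k) (𝓝[>] 1) (𝓝 (∑' k, a k * (k : ℝ))) := by
  refine tendsto_tsum_of_dominated_convergence (hslope.abs.add hmean.abs)
    (fun k => (tendsto_zpowSlope k).const_mul _) ?_
  filter_upwards [Ioc_mem_nhdsGT hz] with w hw k
  have hlower := mul_le_mul_of_nonneg_left (intCast_le_zpowSlope hw.1 k) (ha k)
  have hupper := mul_le_mul_of_nonneg_left (zpowSlope_le_zpowSlope hw.1 hw.2 k) (ha k)
  exact (abs_le_max_abs_abs hlower hupper).trans
    (max_le (le_add_of_nonneg_left (abs_nonneg _)) (le_add_of_nonneg_right (abs_nonneg _)))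

end Slope

section Radius

theorem summable_mul_pow_of_lt_radius {c : ℕ → ℝ} (hc : ∀ k, 0 ≤ c k) {z : ℝ} (hz : 0 ≤ z)
    (hlt : ENNReal.ofReal z < radius c) : Summable fun k => c k * z ^ k := by
  simp only [radius, lt_iSup_iff] at hlt
  obtain ⟨ρ, hρ, hzρ⟩ := hlt
  have hle : z ≤ ρ := by
    rw [← ENNReal.ofReal_coe_nnreal] at hzρ
    exact (ENNReal.ofReal_le_ofReal_iff ρ.2).1 hzρ.le
  exact .of_nonneg_of_le (fun k => mul_nonneg (hc k) (pow_nonneg hz k))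
    (fun k => mul_le_mul_of_nonneg_left (pow_le_pow_left₀ hz hle k) (hc k)) hρ

theorem summable_mul_pow_of_lt_iInf_radius {m : ℕ} {C : ℤ → Matrix (Fin m) (Fin m) ℝ}
    (hC : ∀ k r s, 0 ≤ C k r s) {z : ℝ} (hz : 0 ≤ z)
    (hlt : ENNReal.ofReal z < ⨅ (r : Fin m) (s : Fin m), radius fun k => C ((k : ℤ) + 1) r s)
    (r s : Fin m) : Summable fun k : ℕ => C k r s * z ^ k := by
  have hshift := summable_mul_pow_of_lt_radius (c := fun k => C ((k : ℤ) + 1) r s)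
    (fun k => hC _ r s) hz (hlt.trans_le ((iInf_le _ r).trans (iInf_le _ s)))
  refine (summable_nat_add_iff 1).1 ((hshift.mul_right z).congr fun k => ?_)
  rw [Nat.cast_succ, pow_succ, mul_assoc]

theorem summable_mul_natCast_of_summable_mul_pow {b : ℕ → ℝ} (hb : ∀ k, 0 ≤ b k) {z : ℝ}
    (hz : 1 < z) (h : Summable fun k => b k * z ^ k) : Summable fun k => b k * k := by
  have hle (k : ℕ) : (k : ℝ) ≤ z ^ k * (z - 1)⁻¹ := by
    have hbernoulli := one_add_mul_sub_le_pow (by linarith : -1 ≤ z) k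
    rw [← div_eq_mul_inv, le_div_iff₀ (sub_pos.2 hz)]
    linarith
  refine .of_nonneg_of_le (fun k => mul_nonneg (hb k) k.cast_nonneg) (fun k => ?_)
    (h.mul_right (z - 1)⁻¹)
  rw [mul_assoc]
  exact mul_le_mul_of_nonneg_left (hle k) (hb k)

end Radius

section Phase

open Matrix

variable {m : ℕ} {A : ℤ → Matrix (Fin m) (Fin m) ℝ} {w z : ℝ}

theorem hasSum_prod_fintype {α ι : Type*} [Fintype ι] {f : α × ι → ℝ} {g : ι → ℝ}
    (h : ∀ i, HasSum (fun a => f (a, i)) (g i)) : HasSum f (∑ i, g i) := by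
  classical
  have hfiber (i : ι) : HasSum (fun p : α × ι => if p.2 = i then f p else 0) (g i) := by
    refine ((Prod.mk_left_injective i).hasSum_iff fun p hp => if_neg ?_).1
      (by simpa [Function.comp_def] using h i)
    rintro rfl
    exact hp ⟨p.1, rfl⟩
  simpa using hasSum_sum fun i (_ : i ∈ Finset.univ) => hfiber i

theorem PhaseStochastic.summable (hphase : PhaseStochastic A) (r s : Fin m) :
    Summable fun k => A k r s :=
  (hphase r).summable.comp_injective (Prod.mk_left_injective s)

theorem PhaseStochastic.matA_mem_rowStochastic (hA0 : ∀ k r s, 0 ≤ A k r s)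
    (hphase : PhaseStochastic A) : matA A ∈ rowStochastic ℝ (Fin m) :=
  mem_rowStochastic_iff_sum.2 ⟨fun r s => tsum_nonneg fun k => hA0 k r s, fun r =>
    (hasSum_prod_fintype fun s => (hphase.summable r s).hasSum).unique (hphase r)⟩

theorem AstarR_nonneg (hA0 : ∀ k r s, 0 ≤ A k r s) (hz : 0 ≤ z) (r s : Fin m) :
    0 ≤ AstarR A z r s :=
  tsum_nonneg fun k => mul_nonneg (hA0 k r s) (zpow_nonneg hz k)

theorem AstarR_one (A : ℤ → Matrix (Fin m) (Fin m) ℝ) : AstarR A 1 = matA A := by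
  simp only [AstarR, matA, _root_.one_zpow, mul_one]

theorem continuousOn_AstarR (hA0 : ∀ k r s, 0 ≤ A k r s) (hphase : PhaseStochastic A)
    (hAz : ∀ r s, Summable fun k => A k r s * z ^ k) :
    ContinuousOn (AstarR A) (Set.Icc 1 z) :=
  continuousOn_pi.2 fun r => continuousOn_pi.2 fun s =>
    continuousOn_tsum_mul_zpow (fun k => hA0 k r s) (hphase.summable r s) (hAz r s)

theorem det_one_sub_AstarC (A : ℤ → Matrix (Fin m) (Fin m) ℝ) (t : ℝ) :
    (1 - AstarC A t).det = ((1 - AstarR A t).det : ℝ) := by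
  have hmap : 1 - AstarC A t = Complex.ofRealHom.mapMatrix (1 - AstarR A t) := by
    rw [map_sub, map_one]
    congr 1
    ext r s
    simp [AstarC, AstarR, Complex.ofReal_tsum]
  rw [hmap, ← RingHom.map_det, Complex.ofRealHom_eq_coe]

theorem det_one_sub_AstarR_ne_zero {t : ℝ} (ht : 1 < t) (hphi : ENNReal.ofReal t < phiA A)
    (heta : ENNReal.ofReal t < eta A) : (1 - AstarR A t).det ≠ 0 := by
  intro hdet
  have hnorm : ‖(t : ℂ)‖ = t := by
    rw [Complex.norm_real, Real.norm_of_nonneg (zero_le_one.trans ht.le)]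
  have hmem : (t : ℂ) ∈ Omega A :=
    ⟨by rwa [hnorm], by rwa [hnorm], by rw [det_one_sub_AstarC, hdet, Complex.ofReal_zero]⟩
  have hle : eta A ≤ ENNReal.ofReal ‖(t : ℂ)‖ := sInf_le ⟨_, hmem, rfl⟩
  exact heta.not_ge (hnorm ▸ hle)

theorem PhaseStochastic.summable_mul_zpowSlope (hA0 : ∀ k r s, 0 ≤ A k r s)
    (hphase : PhaseStochastic A) (hAz : ∀ r s, Summable fun k => A k r s * z ^ k)
    (hw : w ∈ Set.Ioc 1 z) (r s : Fin m) : Summable fun k => A k r s * zpowSlope w k :=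
  GIG1.summable_mul_zpowSlope (hphase.summable r s) <|
    summable_mul_zpow_of_le (fun k => hA0 k r s) (hphase.summable r s) (hAz r s) hw.1.le hw.2

/-- The slope between `1` and `w` of the row sums of `A^*`; a finite approximation of
`meanDrift`, which need not converge. -/
noncomputable def secantDrift (A : ℤ → Matrix (Fin m) (Fin m) ℝ) (w : ℝ) (r : Fin m) : ℝ :=
  ∑ s, ∑' k, A k r s * zpowSlope w k

/-- The mean level increment out of phase `r`, the derivative at `1` of the row sums of `A^*`.
Entries with a divergent series contribute the junk value `0`. -/
noncomputable def meanDrift (A : ℤ → Matrix (Fin m) (Fin m) ℝ) (r : Fin m) : ℝ :=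
  ∑ s, ∑' k, A k r s * (k : ℝ)

theorem sum_AstarR_eq (hA0 : ∀ k r s, 0 ≤ A k r s) (hphase : PhaseStochastic A)
    (hAz : ∀ r s, Summable fun k => A k r s * z ^ k) (hw : w ∈ Set.Ioc 1 z) (r : Fin m) :
    ∑ s, AstarR A w r s = 1 + (w - 1) * secantDrift A w r := by
  have hentry (s : Fin m) :
      AstarR A w r s = matA A r s + (w - 1) * ∑' k, A k r s * zpowSlope w k := by
    have hslope := (hphase.summable_mul_zpowSlope hA0 hAz hw r s).mul_left (w - 1)
    rw [← tsum_mul_left]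
    refine Eq.trans (tsum_congr fun k => ?_) ((hphase.summable r s).tsum_add hslope)
    rw [zpow_eq_one_add_mul_zpowSlope w k]
    ring
  rw [Finset.sum_congr rfl fun s _ => hentry s, Finset.sum_add_distrib, ← Finset.mul_sum,
    sum_row_of_mem_rowStochastic (hphase.matA_mem_rowStochastic hA0), secantDrift]

theorem secantDrift_le_secantDrift (hA0 : ∀ k r s, 0 ≤ A k r s) (hphase : PhaseStochastic A)
    (hAz : ∀ r s, Summable fun k => A k r s * z ^ k) {t : ℝ} (ht : 1 < t) (htw : t ≤ w)
    (hwz : w ≤ z) (r : Fin m) : secantDrift A t r ≤ secantDrift A w r :=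
  Finset.sum_le_sum fun s _ =>
    (hphase.summable_mul_zpowSlope hA0 hAz ⟨ht, htw.trans hwz⟩ r s).tsum_le_tsum
      (fun k => mul_le_mul_of_nonneg_left (zpowSlope_le_zpowSlope ht htw k) (hA0 k r s))
      (hphase.summable_mul_zpowSlope hA0 hAz ⟨ht.trans_le htw, hwz⟩ r s)

theorem tendsto_AstarR_mulVec (hA0 : ∀ k r s, 0 ≤ A k r s) (hphase : PhaseStochastic A)
    (hz : 1 < z) (hAz : ∀ r s, Summable fun k => A k r s * z ^ k) (h : Fin m → ℝ) :
    Tendsto (fun t => AstarR A t *ᵥ h) (𝓝[>] 1) (𝓝 (matA A *ᵥ h)) := by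
  have hcont := continuousOn_AstarR hA0 hphase hAz 1 ⟨le_rfl, hz.le⟩
  have htendsto : Tendsto (AstarR A) (𝓝[>] 1) (𝓝 (matA A)) := by
    rw [← AstarR_one]
    exact hcont.mono_of_mem_nhdsWithin <|
      mem_of_superset (Ioc_mem_nhdsGT hz) Set.Ioc_subset_Icc_self
  exact ((continuous_id.matrix_mulVec continuous_const).tendsto _).comp htendsto

/- The vector `1 + (t - 1) h` perturbs the eigenvector `1` of `A^*(1)` to first order. -/
theorem exists_subcritical_of_secantDrift_add_mulVec_lt (hA0 : ∀ k r s, 0 ≤ A k r s)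
    (hphase : PhaseStochastic A) (hAz : ∀ r s, Summable fun k => A k r s * z ^ k)
    (hw : w ∈ Set.Ioc 1 z) {h : Fin m → ℝ}
    (hh : ∀ r, secantDrift A w r + (matA A *ᵥ h) r < h r) :
    ∃ t ∈ Set.Ioc 1 z, Subcritical (AstarR A t) := by
  have hpos : ∀ᶠ t : ℝ in 𝓝[>] 1, ∀ r, 0 < 1 + (t - 1) * h r := by
    refine eventually_all.2 fun r => ?_
    have hcont : Continuous fun t : ℝ => 1 + (t - 1) * h r := by fun_prop
    exact nhdsWithin_le_nhds <| (hcont.tendsto 1).eventually_const_lt (by simp)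
  have hdrift : ∀ᶠ t in 𝓝[>] 1, ∀ r, secantDrift A w r + (AstarR A t *ᵥ h) r < h r := by
    refine eventually_all.2 fun r => ?_
    have hlim := tendsto_pi_nhds.1
      (tendsto_AstarR_mulVec hA0 hphase (hw.1.trans_le hw.2) hAz h) r
    exact (hlim.const_add (secantDrift A w r)).eventually_lt_const (hh r)
  obtain ⟨t, ⟨hpos, hdrift⟩, ht⟩ := ((hpos.and hdrift).and (Ioc_mem_nhdsGT hw.1)).exists
  have htz : t ∈ Set.Ioc 1 z := ⟨ht.1, ht.2.trans hw.2⟩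
  refine ⟨t, htz, fun r => 1 + (t - 1) * h r, hpos, fun r => ?_⟩
  calc (AstarR A t *ᵥ fun r => 1 + (t - 1) * h r) r
      = ∑ s, AstarR A t r s + (t - 1) * (AstarR A t *ᵥ h) r := by
        simp only [mulVec, dotProduct, mul_add, mul_one, Finset.sum_add_distrib, Finset.mul_sum,
          mul_left_comm]
    _ = 1 + (t - 1) * (secantDrift A t r + (AstarR A t *ᵥ h) r) := by
        rw [sum_AstarR_eq hA0 hphase hAz htz]
        ring
    _ ≤ 1 + (t - 1) * (secantDrift A w r + (AstarR A t *ᵥ h) r) := by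
        gcongr
        · exact sub_nonneg.2 ht.1.le
        · exact secantDrift_le_secantDrift hA0 hphase hAz ht.1 ht.2 hw.2 r
    _ < 1 + (t - 1) * h r := by
        gcongr
        · exact sub_pos.2 ht.1
        · exact hdrift r

theorem summable_mul_intCast_of_dotProduct_secantDrift_nonneg (hA0 : ∀ k r s, 0 ≤ A k r s)
    (hphase : PhaseStochastic A) (hz : 1 < z) (hAz : ∀ r s, Summable fun k => A k r s * z ^ k)
    {π : Fin m → ℝ} (hπ : ∀ r, 0 < π r)
    (hnonneg : ∀ w ∈ Set.Ioc 1 z, 0 ≤ π ⬝ᵥ secantDrift A w) (r s : Fin m) :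
    Summable fun k => A k r s * (k : ℝ) := by
  refine summable_mul_intCast_of_tsum_sub_le (C := (π ⬝ᵥ secantDrift A z) / π r)
    (fun k => hA0 k r s) hz (fun w hw => hphase.summable_mul_zpowSlope hA0 hAz hw r s)
    fun w hw => (le_div_iff₀' (hπ r)).2 ?_
  have hentry (r s : Fin m) :
      0 ≤ ∑' k, A k r s * zpowSlope z k - ∑' k, A k r s * zpowSlope w k :=
    sub_nonneg.2 <| (hphase.summable_mul_zpowSlope hA0 hAz hw r s).tsum_le_tsum
      (fun k => mul_le_mul_of_nonneg_left (zpowSlope_le_zpowSlope hw.1 hw.2 k) (hA0 k r s))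
      (hphase.summable_mul_zpowSlope hA0 hAz ⟨hz, le_rfl⟩ r s)
  have hrow (r : Fin m) : 0 ≤ π r * (secantDrift A z r - secantDrift A w r) :=
    mul_nonneg (hπ r).le <|
      sub_nonneg.2 (secantDrift_le_secantDrift hA0 hphase hAz hw.1 hw.2 le_rfl r)
  calc π r * (∑' k, A k r s * zpowSlope z k - ∑' k, A k r s * zpowSlope w k)
      ≤ π r * (secantDrift A z r - secantDrift A w r) := by
        rw [secantDrift, secantDrift, ← Finset.sum_sub_distrib]
        exact mul_le_mul_of_nonneg_left
          (Finset.single_le_sum (fun s _ => hentry r s) (Finset.mem_univ s)) (hπ r).le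
    _ ≤ π ⬝ᵥ (secantDrift A z - secantDrift A w) :=
        Finset.single_le_sum (fun r _ => hrow r) (Finset.mem_univ r)
    _ ≤ π ⬝ᵥ secantDrift A z := by
        rw [dotProduct_sub]
        linarith [hnonneg w hw]

theorem tendsto_secantDrift (hA0 : ∀ k r s, 0 ≤ A k r s) (hphase : PhaseStochastic A)
    (hz : 1 < z) (hAz : ∀ r s, Summable fun k => A k r s * z ^ k)
    (hmean : ∀ r s, Summable fun k => A k r s * (k : ℝ)) :
    Tendsto (secantDrift A) (𝓝[>] 1) (𝓝 (meanDrift A)) :=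
  tendsto_pi_nhds.2 fun r => tendsto_finsetSum _ fun s _ =>
    tendsto_tsum_mul_zpowSlope (fun k => hA0 k r s) hz
      (hphase.summable_mul_zpowSlope hA0 hAz ⟨hz, le_rfl⟩ r s) (hmean r s)

theorem exists_subcritical_or_exists_le_meanDrift_add_mulVec [NeZero m]
    (hA0 : ∀ k r s, 0 ≤ A k r s) (hphase : PhaseStochastic A) (hirr : MatIrreducible (matA A))
    (hz : 1 < z) (hAz : ∀ r s, Summable fun k => A k r s * z ^ k) :
    (∃ t ∈ Set.Ioc 1 z, Subcritical (AstarR A t)) ∨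
      (∀ r s, Summable fun k => A k r s * (k : ℝ)) ∧
        ∃ h : Fin m → ℝ, ∀ r, h r ≤ meanDrift A r + (matA A *ᵥ h) r := by
  have hstoch := hphase.matA_mem_rowStochastic hA0
  have hreach (r s : Fin m) : Relation.ReflTransGen (fun r s => 0 < matA A r s) r s :=
    let ⟨_, _, hn⟩ := hirr r s
    reachable_of_pow_pos (fun _ _ => nonneg_of_mem_rowStochastic hstoch) hn
  obtain ⟨π, hπ, hpoisson⟩ := exists_pos_forall_exists_add_mulVec_sub_eq_dotProduct hstoch hreach
  by_cases hneg : ∃ w ∈ Set.Ioc 1 z, π ⬝ᵥ secantDrift A w < 0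
  · obtain ⟨w, hw, hneg⟩ := hneg
    obtain ⟨h, hh⟩ := hpoisson (secantDrift A w)
    exact .inl <| exists_subcritical_of_secantDrift_add_mulVec_lt (h := h) hA0 hphase hAz hw
      fun r => by linarith [hh r]
  · push Not at hneg
    have hmean := summable_mul_intCast_of_dotProduct_secantDrift_nonneg hA0 hphase hz hAz hπ hneg
    have hlim : Tendsto (fun w => π ⬝ᵥ secantDrift A w) (𝓝[>] 1) (𝓝 (π ⬝ᵥ meanDrift A)) :=
      ((continuous_const.dotProduct continuous_id).tendsto _).comp
        (tendsto_secantDrift hA0 hphase hz hAz hmean)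
    have hnonneg : 0 ≤ π ⬝ᵥ meanDrift A :=
      ge_of_tendsto hlim (mem_of_superset (Ioc_mem_nhdsGT hz) hneg)
    obtain ⟨h, hh⟩ := hpoisson (meanDrift A)
    exact .inr ⟨hmean, h, fun r => by linarith [hh r]⟩

end Phase

section Kernel

open Matrix

variable {m : ℕ} {A : ℤ → Matrix (Fin m) (Fin m) ℝ}

theorem reachable_of_Pn_pos {Q : S m → S m → ℝ} (hQ : ∀ x y, 0 ≤ Q x y) {n : ℕ} {x y : S m}
    (hn : 0 < Pn Q n x y) : Relation.ReflTransGen (fun x y => 0 < Q x y) x y := by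
  induction n generalizing x with
  | zero =>
    obtain rfl : x = y := by
      by_contra hxy
      simp [Pn, hxy] at hn
    exact .refl
  | succ n ih =>
    obtain ⟨u, hu⟩ : ∃ u, 0 < Q x u * Pn Q n u y := by
      by_contra! hle
      exact hn.not_ge (tsum_nonpos hle)
    have hxu : 0 < Q x u := (hQ x u).lt_of_ne (left_ne_zero_of_mul hu.ne').symm
    exact .head hxu (ih (pos_of_mul_pos_right hu hxu.le))

theorem P_zero (A B : ℤ → Matrix (Fin m) (Fin m) ℝ) (r s : Fin m) (k : ℕ) :
    P A B (0, r) (k, s) = B k r s := by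
  cases k <;> rfl

theorem natCast_sub_injective (i : ℕ) : Function.Injective fun k : ℕ => (k : ℤ) - i :=
  (sub_left_injective).comp Nat.cast_injective

theorem hasSum_P_succ_mul (B : ℤ → Matrix (Fin m) (Fin m) ℝ) {i : ℕ} {r : Fin m} {F : S m → ℝ}
    (hF : ∀ s, Summable fun k : ℕ => A ((k : ℤ) - i) r s * F (k + 1, s)) :
    HasSum (fun y => P A B (i + 1, r) y * F y)
      (∑ s, (B (-(i + 1 : ℤ)) r s * F (0, s) +
        ∑' k : ℕ, A ((k : ℤ) - i) r s * F (k + 1, s))) := by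
  refine hasSum_prod_fintype fun s => (hasSum_nat_add_iff' 1).1 ?_
  rw [Finset.sum_range_one]
  exact (add_sub_cancel_left (B (-(i + 1 : ℤ)) r s * F (0, s)) _).symm ▸ (hF s).hasSum

theorem hasSum_P_succ_mul_of_eq_zero (B : ℤ → Matrix (Fin m) (Fin m) ℝ) {i : ℕ} {r : Fin m}
    {F : ℤ → Fin m → ℝ} (hF0 : ∀ l ≤ 0, ∀ s, F l s = 0)
    (hF : ∀ s, Summable fun j => A j r s * F (i + 1 + j) s) :
    HasSum (fun y => P A B (i + 1, r) y * F y.1 y.2) (∑ s, ∑' j, A j r s * F (i + 1 + j) s) := by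
  have hlevel (k : ℕ) : (i : ℤ) + 1 + (k - i) = (k + 1 : ℕ) := by
    push_cast
    ring
  have hshift (s : Fin m) : HasSum (fun k : ℕ => A ((k : ℤ) - i) r s * F (k + 1 : ℕ) s)
      (∑' j, A j r s * F (i + 1 + j) s) := by
    simp only [← hlevel]
    refine ((natCast_sub_injective i).hasSum_iff
      (f := fun j => A j r s * F (i + 1 + j) s) fun j hj => ?_).2 (hF s).hasSum
    have hneg : (i : ℤ) + 1 + j ≤ 0 := by
      by_contra! hpos
      exact hj ⟨(j + i).toNat, by simp only; omega⟩
    rw [hF0 _ hneg, mul_zero]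
  have hsum := hasSum_P_succ_mul B (F := fun y => F y.1 y.2) fun s => (hshift s).summable
  simpa only [hF0 _ (Nat.cast_zero (R := ℤ)).le, mul_zero, zero_add, (hshift _).tsum_eq] using hsum

end Kernel

section NegativeDrift

open Matrix

variable {m : ℕ} {A B : ℤ → Matrix (Fin m) (Fin m) ℝ} {h : Fin m → ℝ}

/-- The level corrected by the phase potential `h` and truncated at `0`: the test function showing
that a positive recurrent chain drifts downwards. It is defined on all integer levels so that
increments can be summed over `ℤ`. -/
noncomputable def truncLevel (h : Fin m → ℝ) (l : ℤ) (s : Fin m) : ℝ :=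
  max (l + h s) 0

theorem truncLevel_nonneg (h : Fin m → ℝ) (l : ℤ) (s : Fin m) : 0 ≤ truncLevel h l s :=
  le_max_right _ _

theorem truncLevel_eq_zero (hh : h ≤ 0) {l : ℤ} (hl : l ≤ 0) (s : Fin m) :
    truncLevel h l s = 0 :=
  max_eq_right (add_nonpos (Int.cast_nonpos.2 hl) (hh s))

theorem truncLevel_natCast_le (hh : h ≤ 0) (k : ℕ) (s : Fin m) : truncLevel h k s ≤ k :=
  max_le (by simpa using hh s) k.cast_nonneg

theorem truncLevel_add_sub_le (hh : h ≤ 0) (l j : ℤ) (r s : Fin m) :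
    max (truncLevel h (l + j) s - truncLevel h l r) 0 ≤ |(j : ℝ)| - h r := by
  have hr : h r ≤ 0 := hh r
  have hs : h s ≤ 0 := hh s
  have hlevel : l + h r ≤ truncLevel h l r := le_max_left _ _
  have hnonneg := truncLevel_nonneg h l r
  have hj := le_abs_self (j : ℝ)
  have hj0 := abs_nonneg (j : ℝ)
  refine max_le (sub_le_iff_le_add.2 (max_le ?_ ?_)) ?_
  · push_cast
    linarith
  · linarith
  · linarith

theorem summable_mul_abs_intCast_add (hA0 : ∀ k r s, 0 ≤ A k r s) (hphase : PhaseStochastic A)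
    (hmean : ∀ r s, Summable fun k => A k r s * (k : ℝ)) (r s : Fin m) (c : ℝ) :
    Summable fun k => A k r s * (|(k : ℝ)| + c) := by
  have habs : Summable fun k => A k r s * |(k : ℝ)| :=
    (hmean r s).abs.congr fun k => by rw [abs_mul, abs_of_nonneg (hA0 k r s)]
  exact (habs.add ((hphase.summable r s).mul_right c)).congr fun k => (mul_add _ _ _).symm

theorem summable_mul_of_le_abs_intCast_add (hA0 : ∀ k r s, 0 ≤ A k r s)
    (hphase : PhaseStochastic A) (hmean : ∀ r s, Summable fun k => A k r s * (k : ℝ))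
    {f : ℤ → ℝ} {c : ℝ} (hf0 : ∀ k, 0 ≤ f k) (hf : ∀ k, f k ≤ |(k : ℝ)| + c) (r s : Fin m) :
    Summable fun k => A k r s * f k :=
  .of_nonneg_of_le (fun k => mul_nonneg (hA0 k r s) (hf0 k))
    (fun k => mul_le_mul_of_nonneg_left (hf k) (hA0 k r s))
    (summable_mul_abs_intCast_add hA0 hphase hmean r s c)

theorem summable_mul_truncLevel_add (hA0 : ∀ k r s, 0 ≤ A k r s) (hphase : PhaseStochastic A)
    (hmean : ∀ r s, Summable fun k => A k r s * (k : ℝ)) (hh : h ≤ 0) (l : ℤ) (r s : Fin m) :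
    Summable fun j => A j r s * truncLevel h (l + j) s := by
  refine summable_mul_of_le_abs_intCast_add (c := truncLevel h l r - h r) hA0 hphase hmean
    (fun j => truncLevel_nonneg h (l + j) s) (fun j => ?_) r s
  linarith [le_max_left (truncLevel h (l + j) s - truncLevel h l r) 0,
    truncLevel_add_sub_le hh l j r s]

theorem hasSum_P_succ_mul_truncLevel (B : ℤ → Matrix (Fin m) (Fin m) ℝ)
    (hA0 : ∀ k r s, 0 ≤ A k r s) (hphase : PhaseStochastic A)
    (hmean : ∀ r s, Summable fun k => A k r s * (k : ℝ)) (hh : h ≤ 0) (i : ℕ) (r : Fin m) :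
    HasSum (fun y => P A B (i + 1, r) y * truncLevel h y.1 y.2)
      (∑ s, ∑' j, A j r s * truncLevel h (i + 1 + j) s) :=
  hasSum_P_succ_mul_of_eq_zero B (fun _ hl s => truncLevel_eq_zero hh hl s)
    fun s => summable_mul_truncLevel_add hA0 hphase hmean hh _ r s

theorem summable_P_zero_mul_truncLevel (hB0 : ∀ k r s, 0 ≤ B k r s)
    (hB : ∀ r s, Summable fun k : ℕ => B k r s * k) (hh : h ≤ 0) (r : Fin m) :
    Summable fun y => P A B (0, r) y * truncLevel h y.1 y.2 := by
  have hphase (s : Fin m) : Summable fun k : ℕ => P A B (0, r) (k, s) * truncLevel h k s := by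
    simp only [P_zero]
    exact .of_nonneg_of_le (fun k => mul_nonneg (hB0 k r s) (truncLevel_nonneg h k s))
      (fun k => mul_le_mul_of_nonneg_left (truncLevel_natCast_le hh k s) (hB0 k r s)) (hB r s)
  exact (hasSum_prod_fintype fun s => (hphase s).hasSum).summable

theorem add_le_sum_tsum_mul_truncLevel (hA0 : ∀ k r s, 0 ≤ A k r s) (hphase : PhaseStochastic A)
    (hmean : ∀ r s, Summable fun k => A k r s * (k : ℝ)) (hh : h ≤ 0)
    (hdrift : ∀ r, h r ≤ meanDrift A r + (matA A *ᵥ h) r) (l : ℤ) (r : Fin m) :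
    l + h r ≤ ∑ s, ∑' j, A j r s * truncLevel h (l + j) s := by
  have hlinear (s : Fin m) : HasSum (fun j => A j r s * ((l + j : ℤ) + h s))
      (matA A r s * l + ∑' j, A j r s * (j : ℝ) + matA A r s * h s) := by
    refine ((((hphase.summable r s).hasSum.mul_right (l : ℝ)).add (hmean r s).hasSum).add
      ((hphase.summable r s).hasSum.mul_right (h s))).congr_fun fun j => ?_
    push_cast
    ring
  calc l + h r
      ≤ l + (meanDrift A r + (matA A *ᵥ h) r) := by gcongr; exact hdrift r
    _ = ∑ s, (matA A r s * l + ∑' j, A j r s * (j : ℝ) + matA A r s * h s) := by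
        rw [Finset.sum_add_distrib, Finset.sum_add_distrib, ← Finset.sum_mul,
          sum_row_of_mem_rowStochastic (hphase.matA_mem_rowStochastic hA0), one_mul, add_assoc]
        rfl
    _ ≤ ∑ s, ∑' j, A j r s * truncLevel h (l + j) s :=
        Finset.sum_le_sum fun s _ => hasSum_le
          (fun j => mul_le_mul_of_nonneg_left (le_max_left _ _) (hA0 j r s)) (hlinear s)
          (summable_mul_truncLevel_add hA0 hphase hmean hh l r s).hasSum

theorem truncLevel_subharmonic (hA0 : ∀ k r s, 0 ≤ A k r s) (hP0 : ∀ x y, 0 ≤ P A B x y)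
    (hphase : PhaseStochastic A) (hmean : ∀ r s, Summable fun k => A k r s * (k : ℝ))
    (hh : h ≤ 0) (hdrift : ∀ r, h r ≤ meanDrift A r + (matA A *ᵥ h) r) (x : S m) :
    truncLevel h x.1 x.2 ≤ ∑' y, P A B x y * truncLevel h y.1 y.2 := by
  have hnonneg : 0 ≤ ∑' y, P A B x y * truncLevel h y.1 y.2 :=
    tsum_nonneg fun y => mul_nonneg (hP0 x y) (truncLevel_nonneg h _ _)
  obtain ⟨_ | i, r⟩ := x
  · rwa [truncLevel_eq_zero hh Nat.cast_zero.le]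
  · refine max_le ?_ hnonneg
    rw [(hasSum_P_succ_mul_truncLevel B hA0 hphase hmean hh i r).tsum_eq, Nat.cast_succ]
    exact add_le_sum_tsum_mul_truncLevel hA0 hphase hmean hh hdrift _ r

theorem tsum_P_succ_mul_truncLevel_increment_le (hA0 : ∀ k r s, 0 ≤ A k r s)
    (hphase : PhaseStochastic A) (hmean : ∀ r s, Summable fun k => A k r s * (k : ℝ))
    (hh : h ≤ 0) (i : ℕ) (r : Fin m) :
    ∑' y : S m, P A B (i + 1, r) y *
        max (truncLevel h y.1 y.2 - truncLevel h (i + 1 : ℕ) r) 0 ≤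
      ∑ s, ∑' j, A j r s * (|(j : ℝ)| - h r) := by
  have hle (s : Fin m) (j : ℤ) :
      max (truncLevel h (i + 1 + j) s - truncLevel h (i + 1 : ℕ) r) 0 ≤ |(j : ℝ)| - h r :=
    truncLevel_add_sub_le hh (i + 1) j r s
  have hsummable (s : Fin m) : Summable fun j =>
      A j r s * max (truncLevel h (i + 1 + j) s - truncLevel h (i + 1 : ℕ) r) 0 :=
    summable_mul_of_le_abs_intCast_add hA0 hphase hmean (fun _ => le_max_right _ _) (hle s) r s
  have hsum := hasSum_P_succ_mul_of_eq_zero B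
    (F := fun l s => max (truncLevel h l s - truncLevel h (i + 1 : ℕ) r) 0)
    (fun l hl s => by simp [truncLevel_eq_zero hh hl, truncLevel_nonneg]) hsummable
  rw [hsum.tsum_eq]
  exact Finset.sum_le_sum fun s _ => (hsummable s).tsum_le_tsum
    (fun j => mul_le_mul_of_nonneg_left (hle s j) (hA0 j r s))
    (summable_mul_abs_intCast_add hA0 hphase hmean r s (-h r))

theorem bddAbove_truncLevel_increment (hA0 : ∀ k r s, 0 ≤ A k r s) (hphase : PhaseStochastic A)
    (hmean : ∀ r s, Summable fun k => A k r s * (k : ℝ)) (hh : h ≤ 0) :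
    BddAbove (Set.range fun x : S m =>
      ∑' y : S m, P A B x y * max (truncLevel h y.1 y.2 - truncLevel h x.1 x.2) 0) := by
  obtain ⟨C₀, hC₀⟩ := (Set.finite_range fun r : Fin m =>
    ∑' y : S m, P A B (0, r) y *
      max (truncLevel h y.1 y.2 - truncLevel h (0 : ℕ) r) 0).bddAbove
  obtain ⟨C₁, hC₁⟩ := (Set.finite_range fun r : Fin m =>
    ∑ s, ∑' j, A j r s * (|(j : ℝ)| - h r)).bddAbove
  refine ⟨max C₀ C₁, ?_⟩
  rintro _ ⟨⟨_ | i, r⟩, rfl⟩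
  · exact le_max_of_le_left (hC₀ ⟨r, rfl⟩)
  · exact le_max_of_le_right <|
      (tsum_P_succ_mul_truncLevel_increment_le hA0 hphase hmean hh i r).trans (hC₁ ⟨r, rfl⟩)

theorem exists_meanDrift_add_mulVec_lt_of_nonpos [NeZero m] {pd : S m → ℝ}
    (hA0 : ∀ k r s, 0 ≤ A k r s) (hB0 : ∀ k r s, 0 ≤ B k r s) (hP : Stochastic (P A B))
    (hirr : ChainIrreducible (P A B)) (hphase : PhaseStochastic A)
    (hpd : IsStationary (P A B) pd) (hmean : ∀ r s, Summable fun k => A k r s * (k : ℝ))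
    (hB : ∀ r s, Summable fun k : ℕ => B k r s * k) (hh : h ≤ 0) :
    ∃ r, meanDrift A r + (matA A *ᵥ h) r < h r := by
  by_contra! hdrift
  have hsummable (x : S m) : Summable fun y => P A B x y * truncLevel h y.1 y.2 := by
    obtain ⟨_ | i, r⟩ := x
    · exact summable_P_zero_mul_truncLevel hB0 hB hh r
    · exact (hasSum_P_succ_mul_truncLevel B hA0 hphase hmean hh i r).summable
  have hreach (x y : S m) : Relation.ReflTransGen (fun x y => 0 < P A B x y) x y :=
    let ⟨_, _, hn⟩ := hirr x y
    reachable_of_Pn_pos hP.1 hn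
  obtain ⟨n, hn⟩ := exists_nat_gt (-h 0)
  have hzero : truncLevel h n 0 = 0 :=
    subharmonic_eq_zero_of_positive_recurrent (G := fun x : S m => truncLevel h x.1 x.2)
      hP.1 hP.2 hreach hpd.1 hpd.2.1 hpd.2.2 (fun x => truncLevel_nonneg h _ _) hsummable
      (truncLevel_subharmonic hA0 hP.1 hphase hmean hh hdrift)
      (bddAbove_truncLevel_increment hA0 hphase hmean hh)
      (x := (0, 0)) (truncLevel_eq_zero hh Nat.cast_zero.le 0) (n, 0)
  have hlevel : ((n : ℤ) : ℝ) + h 0 ≤ truncLevel h n 0 := le_max_left _ _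
  push_cast at hlevel
  linarith

theorem exists_meanDrift_add_mulVec_lt [NeZero m] {pd : S m → ℝ}
    (hA0 : ∀ k r s, 0 ≤ A k r s) (hB0 : ∀ k r s, 0 ≤ B k r s) (hP : Stochastic (P A B))
    (hirr : ChainIrreducible (P A B)) (hphase : PhaseStochastic A)
    (hpd : IsStationary (P A B) pd) (hmean : ∀ r s, Summable fun k => A k r s * (k : ℝ))
    (hB : ∀ r s, Summable fun k : ℕ => B k r s * k) (h : Fin m → ℝ) :
    ∃ r, meanDrift A r + (matA A *ᵥ h) r < h r := by
  obtain ⟨c, hc⟩ := (Set.finite_range h).bddAbove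
  obtain ⟨r, hr⟩ := exists_meanDrift_add_mulVec_lt_of_nonpos (h := h - fun _ => c)
    hA0 hB0 hP hirr hphase hpd hmean hB fun r => sub_nonpos.2 (hc ⟨r, rfl⟩)
  rw [mulVec_sub, mulVec_const_of_mem_rowStochastic (hphase.matA_mem_rowStochastic hA0)] at hr
  refine ⟨r, ?_⟩
  simp only [Pi.sub_apply] at hr
  linarith

theorem subcritical_AstarR [NeZero m] {pd : S m → ℝ} {z : ℝ} (hA0 : ∀ k r s, 0 ≤ A k r s)
    (hB0 : ∀ k r s, 0 ≤ B k r s) (hP : Stochastic (P A B)) (hirr : ChainIrreducible (P A B))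
    (hphase : PhaseStochastic A) (hphaseirr : MatIrreducible (matA A))
    (hpd : IsStationary (P A B) pd) (hz : 1 < z)
    (hAz : ∀ r s, Summable fun k => A k r s * z ^ k)
    (hBz : ∀ r s, Summable fun k : ℕ => B k r s * z ^ k)
    (hphi : ENNReal.ofReal z < phiA A) (heta : ENNReal.ofReal z < eta A) :
    Subcritical (AstarR A z) := by
  obtain ⟨t, ht, hsub⟩ | ⟨hmean, h, hh⟩ :=
    exists_subcritical_or_exists_le_meanDrift_add_mulVec hA0 hphase hphaseirr hz hAz
  · refine Subcritical.of_isPreconnected (M := AstarR A) isPreconnected_Icc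
      (fun u hu => AstarR_nonneg hA0 (by linarith [ht.1, hu.1]))
      ((continuousOn_AstarR hA0 hphase hAz).mono (Set.Icc_subset_Icc_left ht.1.le))
      (fun u hu => ?_) (Set.left_mem_Icc.2 ht.2) (Set.right_mem_Icc.2 ht.2) hsub
    have hle := ENNReal.ofReal_le_ofReal hu.2
    exact det_one_sub_AstarR_ne_zero (ht.1.trans_le hu.1) (hle.trans_lt hphi) (hle.trans_lt heta)
  · obtain ⟨r, hr⟩ := exists_meanDrift_add_mulVec_lt hA0 hB0 hP hirr hphase hpd hmean
      (fun r s => summable_mul_natCast_of_summable_mul_pow (fun k => hB0 k r s) hz (hBz r s)) h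
    exact absurd (hh r) hr.not_ge

end NegativeDrift

section GeometricDrift

open Matrix

variable {m : ℕ} {A B : ℤ → Matrix (Fin m) (Fin m) ℝ} {z c : ℝ} {Y : Fin m → ℝ}

theorem summable_P_zero_mul_pow_mul (A : ℤ → Matrix (Fin m) (Fin m) ℝ)
    (hBz : ∀ r s, Summable fun k : ℕ => B k r s * z ^ k) (Y : Fin m → ℝ) (r : Fin m) :
    Summable fun y : S m => P A B (0, r) y * (z ^ y.1 * Y y.2) := by
  refine (hasSum_prod_fintype fun s => Summable.hasSum ?_).summable
  refine ((hBz r s).mul_right (Y s)).congr fun k => ?_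
  rw [P_zero, mul_assoc]

theorem hasSum_P_succ_mul_pow_mul (B : ℤ → Matrix (Fin m) (Fin m) ℝ) (hz : z ≠ 0)
    (hAz : ∀ r s, Summable fun k => A k r s * z ^ k) (Y : Fin m → ℝ) (i : ℕ) (r : Fin m) :
    HasSum (fun y : S m => P A B (i + 1, r) y * (z ^ y.1 * Y y.2))
      (∑ s, (B (-(i + 1 : ℤ)) r s * Y s +
        (∑' k : ℕ, A ((k : ℤ) - i) r s * z ^ ((k : ℤ) - i)) * (z ^ (i + 1) * Y s))) := by
  have hpow (k : ℕ) : z ^ (k + 1) = z ^ ((k : ℤ) - i) * z ^ (i + 1) := by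
    rw [← zpow_natCast, ← zpow_natCast, ← zpow_add₀ hz]
    congr 1
    push_cast
    ring
  have hterm (s : Fin m) (k : ℕ) : A ((k : ℤ) - i) r s * (z ^ (k + 1) * Y s) =
      A ((k : ℤ) - i) r s * z ^ ((k : ℤ) - i) * (z ^ (i + 1) * Y s) := by
    rw [hpow]
    ring
  have hsummable (s : Fin m) :
      Summable fun k : ℕ => A ((k : ℤ) - i) r s * (z ^ (k + 1) * Y s) := by
    simp only [hterm]
    exact ((hAz r s).comp_injective (natCast_sub_injective i)).mul_right _
  simpa only [hterm, tsum_mul_right, pow_zero, one_mul] using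
    hasSum_P_succ_mul B (F := fun y => z ^ y.1 * Y y.2) hsummable

theorem tsum_P_succ_mul_pow_mul_le (hA0 : ∀ k r s, 0 ≤ A k r s) (hP : Stochastic (P A B))
    (hz : 0 < z) (hAz : ∀ r s, Summable fun k => A k r s * z ^ k) (hY : ∀ r, 0 ≤ Y r)
    (hYeig : AstarR A z *ᵥ Y = c • Y) (i : ℕ) (r : Fin m) :
    ∑' y : S m, P A B (i + 1, r) y * (z ^ y.1 * Y y.2) ≤
      ∑ s, Y s + c * (z ^ (i + 1) * Y r) := by
  have hB1 (s : Fin m) : B (-(i + 1 : ℤ)) r s ≤ 1 :=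
    le_hasSum (hP.2 (i + 1, r)) (0, s) fun y _ => hP.1 _ y
  have hA (s : Fin m) : ∑' k : ℕ, A ((k : ℤ) - i) r s * z ^ ((k : ℤ) - i) ≤ AstarR A z r s :=
    tsum_comp_le_tsum_of_inj (hAz r s)
      (fun k => mul_nonneg (hA0 k r s) (zpow_nonneg hz.le k)) (natCast_sub_injective i)
  have heig : ∑ s, AstarR A z r s * (z ^ (i + 1) * Y s) = c * (z ^ (i + 1) * Y r) := by
    simp only [mul_left_comm _ (z ^ (i + 1)), ← Finset.mul_sum]
    exact congrArg (z ^ (i + 1) * ·) (congrFun hYeig r)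
  rw [(hasSum_P_succ_mul_pow_mul B hz.ne' hAz Y i r).tsum_eq, Finset.sum_add_distrib, ← heig]
  gcongr with s _ s _
  · exact mul_le_of_le_one_left (hY s) (hB1 s)
  · exact mul_nonneg (pow_nonneg hz.le _) (hY s)
  · exact hA s

/- Off finitely many levels, half of the gap `1 - c` absorbs the constant `C`. -/
theorem exists_finset_geometric_bound [NeZero m] {f : S m → ℝ} {C : ℝ} (hz : 1 < z)
    (hY : ∀ r, 1 ≤ Y r) (hc : c < 1)
    (hf : ∀ i r, f (i + 1, r) ≤ C + c * (z ^ (i + 1) * Y r)) :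
    ∃ H : Finset (S m), H.Nonempty ∧ ∃ lam : ℝ, lam < 1 ∧
      ∀ x ∉ H, f x ≤ lam * (z ^ x.1 * Y x.2) := by
  have hgap : 0 < (1 - c) / 2 := by linarith
  obtain ⟨N, hN⟩ := pow_unbounded_of_one_lt (C / ((1 - c) / 2)) hz
  rw [div_lt_iff₀ hgap] at hN
  refine ⟨Finset.range (N + 1) ×ˢ Finset.univ, ⟨(0, 0), by simp⟩, (1 + c) / 2, by linarith, ?_⟩
  rintro ⟨i, r⟩ hx
  have hNi : N < i := by simpa [Nat.lt_succ_iff] using hx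
  obtain ⟨i, rfl⟩ := Nat.exists_eq_succ_of_ne_zero (Nat.ne_zero_of_lt hNi)
  have hV : z ^ N ≤ z ^ (i + 1) * Y r :=
    (pow_le_pow_right₀ hz.le hNi.le).trans <|
      le_mul_of_one_le_right (pow_nonneg (zero_le_one.trans hz.le) _) (hY r)
  calc f (i + 1, r)
      ≤ C + c * (z ^ (i + 1) * Y r) := hf i r
    _ ≤ z ^ (i + 1) * Y r * ((1 - c) / 2) + c * (z ^ (i + 1) * Y r) := by
        gcongr
        exact hN.le.trans (mul_le_mul_of_nonneg_right hV hgap.le)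
    _ = (1 + c) / 2 * (z ^ (i + 1) * Y r) := by ring

theorem geometric_drift_general [NeZero m] (hA0 : ∀ k r s, 0 ≤ A k r s)
    (hB0 : ∀ k r s, 0 ≤ B k r s) (hP : Stochastic (P A B)) (hirr : ChainIrreducible (P A B))
    (hphase : PhaseStochastic A) (hphaseirr : MatIrreducible (matA A))
    {pd : S m → ℝ} (hpd : IsStationary (P A B) pd) (hz : 1 < z)
    (hzlt : ENNReal.ofReal z < min (phiA A) (min (phiB B) (eta A)))
    (hY : ∀ r, 1 ≤ Y r) (hYeig : AstarR A z *ᵥ Y = c • Y) :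
    (∀ x : S m, 1 ≤ z ^ x.1 * Y x.2) ∧
      ∃ H : Finset (S m), H.Nonempty ∧
        ∃ lam : ℝ, lam < 1 ∧
          (∀ x : S m, x ∉ H →
            Summable (fun y : S m => P A B x y * (z ^ y.1 * Y y.2)) ∧
              (∑' y : S m, P A B x y * (z ^ y.1 * Y y.2)) ≤ lam * (z ^ x.1 * Y x.2)) ∧
          (∀ x : S m, x ∈ H → Summable fun y : S m => P A B x y * (z ^ y.1 * Y y.2)) := by
  obtain ⟨hphiA, hphiB, heta⟩ : _ ∧ _ ∧ _ := by simpa only [lt_min_iff] using hzlt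
  have hz0 : 0 < z := zero_lt_one.trans hz
  have hY0 (r : Fin m) : 0 < Y r := zero_lt_one.trans_le (hY r)
  have hAz (r s : Fin m) : Summable fun k => A k r s * z ^ k :=
    summable_mul_zpow_of_nat (fun k => hA0 k r s) (hphase.summable r s) hz.le
      (summable_mul_pow_of_lt_iInf_radius hA0 hz0.le hphiA r s)
  have hBz := summable_mul_pow_of_lt_iInf_radius hB0 hz0.le hphiB
  have hc : c < 1 := Subcritical.eigenvalue_lt_one (AstarR_nonneg hA0 hz0.le)
    (subcritical_AstarR hA0 hB0 hP hirr hphase hphaseirr hpd hz hAz hBz hphiA heta) hY0 hYeig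
  have hsummable (x : S m) : Summable fun y : S m => P A B x y * (z ^ y.1 * Y y.2) := by
    obtain ⟨_ | i, r⟩ := x
    · exact summable_P_zero_mul_pow_mul A hBz Y r
    · exact (hasSum_P_succ_mul_pow_mul B hz0.ne' hAz Y i r).summable
  obtain ⟨H, hH, lam, hlam, hdrift⟩ := exists_finset_geometric_bound
    (f := fun x => ∑' y : S m, P A B x y * (z ^ y.1 * Y y.2)) hz hY hc
    (tsum_P_succ_mul_pow_mul_le hA0 hP hz0 hAz (fun r => (hY0 r).le) hYeig)
  exact ⟨fun x => one_le_mul_of_one_le_of_one_le (one_le_pow₀ hz.le) (hY x.2),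
    H, hH, lam, hlam, fun x hx => ⟨hsummable x, hdrift x hx⟩, fun x _ => hsummable x⟩

end GeometricDrift

/-- Geometric drift condition for `V(i,r) = zⁱ y_r`: for an irreducible,
aperiodic, positive recurrent `GI/G/1`-type chain with stochastic phase matrix and
`min(φ_{A+}, φ_{B+}) > 1`, for any `1 < z < min(φ_{A+}, φ_{B+}, η)` and the corresponding
Perron–Frobenius eigenvector `Y ≥ e` of `A*(z)`, the function `V ≥ 1` and there are a
nonempty finite set `H` and `λ < 1` with `PV ≤ λ V` off `H` and `PV < ∞` on `H`. -/
theorem geometric_drift {m : ℕ} (hm : 0 < m)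
    (A B : ℤ → Matrix (Fin m) (Fin m) ℝ)
    (hA0 : ∀ k r s, 0 ≤ A k r s) (hB0 : ∀ k r s, 0 ≤ B k r s)
    (hP : Stochastic (P A B))
    (hirr : ChainIrreducible (P A B)) (hap : ChainAperiodic (P A B))
    (hphase : PhaseStochastic A) (hphaseirr : MatIrreducible (matA A))
    (pd : S m → ℝ) (hpd : IsStationary (P A B) pd)
    (hphi : 1 < min (phiA A) (phiB B))
    (z : ℝ) (hz1 : 1 < z)
    (hz2 : ENNReal.ofReal z < min (phiA A) (min (phiB B) (eta A)))
    (Y : Fin m → ℝ) (hY1 : ∀ r, 1 ≤ Y r)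
    (hYeig : (AstarR A z).mulVec Y = chi (AstarR A z) • Y) :
    (∀ x : S m, 1 ≤ z ^ x.1 * Y x.2) ∧
      ∃ H : Finset (S m), H.Nonempty ∧
        ∃ lam : ℝ, lam < 1 ∧
          (∀ x : S m, x ∉ H →
            Summable (fun y : S m => P A B x y * (z ^ y.1 * Y y.2)) ∧
              (∑' y : S m, P A B x y * (z ^ y.1 * Y y.2)) ≤ lam * (z ^ x.1 * Y x.2)) ∧
          (∀ x : S m, x ∈ H → Summable fun y : S m => P A B x y * (z ^ y.1 * Y y.2)) :=
  haveI : NeZero m := ⟨hm.ne'⟩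
  geometric_drift_general hA0 hB0 hP hirr hphase hphaseirr hpd hz1 hz2 hY1 hYeig

end GIG1
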